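/- For every n ≥ 1, the maximum of the total size ∑_{r ∈ (ℤ/2ℤ)^n} |A(r)| over all families of subsets A(r) ⊆ (ℤ/3ℤ)^n indexed by r ∈ (ℤ/2ℤ)^n satisfying property (*)_5 equals r_5(ℤ_6^n). -/

import Mathlib

/-- `A` contains a `k`-term arithmetic progression `a, a+d, …, a+(k-1)d`
whose terms are pairwise distinct. -/
def IsDistinctAP {G : Type*} [AddCommGroup G] (k : ℕ) (A : Set G) : Prop :=
  ∃ a d : G, (∀ i : Fin k, a + (i : ℕ) • d ∈ A) ∧
    Function.Injective fun i : Fin k => a + (i : ℕ) • d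

/-- `rAP k m n` is the largest cardinality of a subset of `(ℤ/mℤ)^n` containing
no `k`-term arithmetic progression of pairwise distinct elements. -/
noncomputable def rAP (k m n : ℕ) : ℕ :=
  sSup {s : ℕ | ∃ A : Finset (Fin n → ZMod m),
    ¬ IsDistinctAP k (A : Set (Fin n → ZMod m)) ∧ A.card = s}

/-! By the Chinese remainder theorem `(ℤ/6ℤ)^n ≃ U × V` with `U = (ℤ/2ℤ)^n` and `V = (ℤ/3ℤ)^n`,
and a subset of `U × V` is the family of its fibres over `U`. A difference `(u, v)` has order `6`
if `u` and `v` are both nonzero, and order at most `3` otherwise, so five terms are distinct exactly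
in the former case. Reducing the first coordinate modulo `2` and the second modulo `3`, the
progression from `(x, y)` is then `(x, y), (x + u, y + v), (x, y + 2v), (x + u, y), (x, y + v)`:
a full line `y, y + v, y + 2v` of `V` in the fibre over `x`, two points of which also lie in
the fibre over `x + u`. -/

open Finset Function

section Progressions

variable {G H : Type*} [AddCommGroup G] [AddCommGroup H] {k : ℕ}

lemma isDistinctAP_preimage_addEquiv (e : G ≃+ H) {B : Set H} :
    IsDistinctAP k (e ⁻¹' B) ↔ IsDistinctAP k B := by
  refine e.toEquiv.exists_congr fun a ↦ e.toEquiv.exists_congr fun d ↦ and_congr ?_ ?_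
  · simp
  · rw [← e.injective.of_comp_iff]
    simp [comp_def]

lemma not_isDistinctAP_empty (hk : k ≠ 0) : ¬ IsDistinctAP k (∅ : Set G) :=
  fun ⟨_, _, hmem, _⟩ ↦ hmem ⟨0, Nat.pos_of_ne_zero hk⟩

lemma isGreatest_sSup_card_of_not_isDistinctAP [Finite G] (hk : k ≠ 0) :
    IsGreatest {s : ℕ | ∃ B : Finset G, ¬ IsDistinctAP k (B : Set G) ∧ B.card = s}
      (sSup {s : ℕ | ∃ B : Finset G, ¬ IsDistinctAP k (B : Set G) ∧ B.card = s}) := by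
  have hfinite := (Set.toFinite {B : Finset G | ¬ IsDistinctAP k (B : Set G)}).image card
  exact hfinite.isCompact.isGreatest_sSup ⟨0, ∅, by simpa using not_isDistinctAP_empty hk, rfl⟩

lemma injective_fin_add_nsmul_iff {a d : G} (hd : IsOfFinAddOrder d) :
    Injective (fun i : Fin k ↦ a + (i : ℕ) • d) ↔ k ≤ addOrderOf d := by
  constructor
  · intro hinj
    by_contra! hlt
    have heq : (⟨0, hd.addOrderOf_pos.trans hlt⟩ : Fin k) = ⟨addOrderOf d, hlt⟩ :=
      hinj (by simp)
    exact hd.addOrderOf_pos.ne (congrArg Fin.val heq)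
  · intro hle i j hij
    exact Fin.ext <| nsmul_injOn_Iio_addOrderOf (i.isLt.trans_le hle) (j.isLt.trans_le hle)
      (add_left_cancel hij)

lemma isOfFinAddOrder_of_module_zmod (n : ℕ) [NeZero n] [Module (ZMod n) G] (g : G) :
    IsOfFinAddOrder g :=
  isOfFinAddOrder_iff_nsmul_eq_zero.2 ⟨n, NeZero.pos n, ZModModule.char_nsmul_eq_zero n g⟩

end Progressions

section StarFive

variable {U V : Type*} [AddCommGroup V]

/-- Property `(*)₅` for a family of subsets of `V` indexed by an arbitrary type: no three-term
progression of distinct elements lies in one member while its first two terms lie in another. As in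
the main theorem, a progression `a, b, c` is encoded by the equation `a + c = b + b`. -/
def StarFive (A : U → Set V) : Prop :=
  ¬ ∃ (r' r'' : U) (a b c : V), r' ≠ r'' ∧
    a + c = b + b ∧ a ≠ b ∧ a ≠ c ∧ b ≠ c ∧
    a ∈ A r' ∧ b ∈ A r' ∧ c ∈ A r' ∧ a ∈ A r'' ∧ b ∈ A r''

variable [AddCommGroup U] [Module (ZMod 2) U] [Module (ZMod 3) V]

lemma five_le_addOrderOf_prodMk_iff {u : U} {v : V} :
    5 ≤ addOrderOf (u, v) ↔ u ≠ 0 ∧ v ≠ 0 := by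
  have hu := ZModModule.char_nsmul_eq_zero 2 u
  have hv := ZModModule.char_nsmul_eq_zero 3 v
  constructor
  · intro hle
    constructor
    · rintro rfl
      have : addOrderOf ((0 : U), v) ≤ 3 := addOrderOf_le_of_nsmul_eq_zero (by simp) (by simp [hv])
      omega
    · rintro rfl
      have : addOrderOf (u, (0 : V)) ≤ 2 := addOrderOf_le_of_nsmul_eq_zero (by simp) (by simp [hu])
      omega
  · rintro ⟨hu0, hv0⟩
    rw [Prod.addOrderOf_mk, addOrderOf_eq_prime hu hu0, addOrderOf_eq_prime hv hv0]
    decide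

lemma forall_fin_five_add_nsmul_mem_iff {B : Set (U × V)} {x u : U} {y v : V} :
    (∀ i : Fin 5, (x, y) + (i : ℕ) • (u, v) ∈ B) ↔
      (x, y) ∈ B ∧ (x + u, y + v) ∈ B ∧ (x, y + 2 • v) ∈ B ∧ (x + u, y) ∈ B ∧ (x, y + v) ∈ B := by
  have hu := ZModModule.char_nsmul_eq_zero 2 u
  have hv := ZModModule.char_nsmul_eq_zero 3 v
  have hu3 : 3 • u = u := by rw [succ_nsmul, hu, zero_add]
  have hu4 : 4 • u = 0 := by rw [mul_nsmul u 2 2, hu, nsmul_zero]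
  have hv4 : 4 • v = v := by rw [succ_nsmul, hv, zero_add]
  simp [Fin.forall_fin_succ, hu, hv, hu3, hu4, hv4]

lemma isDistinctAP_five_prod_iff {B : Set (U × V)} :
    IsDistinctAP 5 B ↔ ∃ (x : U) (y : V) (u : U) (v : V),
      ((x, y) ∈ B ∧ (x + u, y + v) ∈ B ∧ (x, y + 2 • v) ∈ B ∧ (x + u, y) ∈ B ∧ (x, y + v) ∈ B) ∧
      u ≠ 0 ∧ v ≠ 0 := by
  have hfin (u : U) (v : V) : IsOfFinAddOrder (u, v) :=
    (isOfFinAddOrder_of_module_zmod 2 u).prod_mk (isOfFinAddOrder_of_module_zmod 3 v)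
  simp only [IsDistinctAP, Prod.exists, forall_fin_five_add_nsmul_mem_iff,
    injective_fin_add_nsmul_iff (hfin _ _), five_le_addOrderOf_prodMk_iff]

lemma starFive_fibers_iff {B : Set (U × V)} :
    StarFive (fun r ↦ Prod.mk r ⁻¹' B) ↔ ¬ IsDistinctAP 5 B := by
  rw [isDistinctAP_five_prod_iff, StarFive, not_iff_not]
  constructor
  · rintro ⟨r', r'', a, b, c, hr, hac, hab, -, -, ha', hb', hc', ha'', hb''⟩
    have hc : a + 2 • (b - a) = c := by
      rw [← add_right_inj a, hac]
      module
    refine ⟨r', a, r'' - r', b - a, ?_, sub_ne_zero.2 hr.symm, sub_ne_zero.2 hab.symm⟩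
    simpa [hc] using ⟨ha', hb'', hc', ha'', hb'⟩
  · rintro ⟨x, y, u, v, ⟨hx0, hxu1, hx2, hxu0, hx1⟩, hu, hv⟩
    have h2v : 2 • v ≠ 0 := by
      intro h
      apply hv
      simpa [succ_nsmul, h] using ZModModule.char_nsmul_eq_zero 3 v
    exact ⟨x, x + u, y, y + v, y + 2 • v, by simpa using hu, by module, by simpa using hv,
      by simpa using h2v, by simpa [two_nsmul] using hv, hx0, hx1, hx2, hxu0, hxu1⟩

end StarFive

section Families

variable {G U V : Type*} [Fintype U]

/-- The finite subsets of a set `G ≃ U × V`, with `U` finite, correspond to the families of finite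
subsets of `V` indexed by `U`, namely their fibres over `U`. -/
noncomputable def fiberFamilyEquiv (e : G ≃ U × V) : (U → Finset V) ≃ Finset G where
  toFun A := (univ.sigma A).map ((Equiv.sigmaEquivProd U V).trans e.symm).toEmbedding
  invFun B r := B.preimage (e.symm ∘ Prod.mk r)
    (e.symm.injective.comp (Prod.mk_right_injective r)).injOn
  left_inv A := by ext; simp
  right_inv B := by ext; simp [Equiv.symm_apply_eq, Prod.ext_iff]

lemma card_fiberFamilyEquiv (e : G ≃ U × V) (A : U → Finset V) :
    (fiberFamilyEquiv e A).card = ∑ r, (A r).card := by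
  simp [fiberFamilyEquiv]

lemma coe_fiberFamilyEquiv (e : G ≃ U × V) (A : U → Finset V) :
    (fiberFamilyEquiv e A : Set G) = e ⁻¹' {p | p.2 ∈ A p.1} := by
  ext
  simp [fiberFamilyEquiv, Equiv.symm_apply_eq, Prod.ext_iff]

end Families

/-- The Chinese remainder isomorphism `(ℤ/mnℤ)^ι ≃ (ℤ/mℤ)^ι × (ℤ/nℤ)^ι`, applied coordinatewise. -/
def piZModMulAddEquiv (ι : Type*) {m n : ℕ} (h : m.Coprime n) :
    (ι → ZMod (m * n)) ≃+ (ι → ZMod m) × (ι → ZMod n) where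
  __ := (Equiv.piCongrRight fun _ ↦ (ZMod.chineseRemainder h).toEquiv).trans
    (Equiv.arrowProdEquivProdArrow ι (fun _ ↦ ZMod m) fun _ ↦ ZMod n)
  map_add' x y := by ext <;> simp [Equiv.arrowProdEquivProdArrow]

section General

variable {G U V : Type*} [AddCommGroup G] [AddCommGroup U] [AddCommGroup V]
  [Module (ZMod 2) U] [Module (ZMod 3) V] [Fintype U]

lemma starFive_iff_not_isDistinctAP_fiberFamilyEquiv (e : G ≃+ U × V) (A : U → Finset V) :
    StarFive (fun r ↦ (A r : Set V)) ↔
      ¬ IsDistinctAP 5 (fiberFamilyEquiv e.toEquiv A : Set G) := by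
  rw [coe_fiberFamilyEquiv]
  exact (starFive_fibers_iff (B := {p | p.2 ∈ A p.1})).trans
    (isDistinctAP_preimage_addEquiv e).symm.not

theorem subset_reformulation_star5_general [Finite V] (e : G ≃+ U × V) :
    IsGreatest {S : ℕ | ∃ A : U → Finset V,
        StarFive (fun r ↦ (A r : Set V)) ∧ S = ∑ r, (A r).card}
      (sSup {s : ℕ | ∃ B : Finset G, ¬ IsDistinctAP 5 (B : Set G) ∧ B.card = s}) := by
  have : Finite G := .of_equiv _ e.symm.toEquiv
  convert isGreatest_sSup_card_of_not_isDistinctAP (G := G) (k := 5) (by simp) using 1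
  ext S
  refine (fiberFamilyEquiv e.toEquiv).exists_congr fun A ↦ ?_
  rw [starFive_iff_not_isDistinctAP_fiberFamilyEquiv e, card_fiberFamilyEquiv, eq_comm]

end General

theorem subset_reformulation_star5 (n : ℕ) (hn : 1 ≤ n) :
    IsGreatest {S : ℕ | ∃ A : (Fin n → ZMod 2) → Finset (Fin n → ZMod 3),
      (¬ ∃ (r' r'' : Fin n → ZMod 2) (a b c : Fin n → ZMod 3), r' ≠ r'' ∧
        a + c = b + b ∧ a ≠ b ∧ a ≠ c ∧ b ≠ c ∧
        a ∈ A r' ∧ b ∈ A r' ∧ c ∈ A r' ∧ a ∈ A r'' ∧ b ∈ A r'') ∧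
      S = ∑ r : Fin n → ZMod 2, (A r).card}
    (rAP 5 6 n) :=
  subset_reformulation_star5_general (piZModMulAddEquiv (Fin n) (show Nat.Coprime 2 3 by decide))
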